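/- For every ν₀ ∈ (0, 1) there exist ε₀ > 0 and C(ν₀) > 0 such that for all ε ∈ (0, ε₀) and every continuously differentiable b̄₁ : [−1,1] → ℝ, setting b₁ = θ_{2,ε} b̄₁, one has Q₁(b₁) ≥ (ν₀/2) ∫_{−1}^{1} θ_{2,ε}(r)² b̄₁'(r)² dr − (C(ν₀)/ε) e^{−α/ε} ∫_{−1}^{1} θ_{2,ε}(r)² b̄₁(r)² dr. -/

import Mathlib

open Filter MeasureTheory

/-- `f_B(ρ) = (ρ² − a²)(ρ² − b²)(2ρ² − a² − b²)`. -/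
noncomputable def fB (a b ρ : ℝ) : ℝ :=
  (ρ ^ 2 - a ^ 2) * (ρ ^ 2 - b ^ 2) * (2 * ρ ^ 2 - a ^ 2 - b ^ 2)

/-- The quadratic form `Q₁(u) = ∫_{−1}^{1} (u'(r)² + ε⁻² f_B(ρ₀(r/ε)) u(r)²) dr`, written for
a function `u` with (weak) derivative `g`. -/
noncomputable def Q1 (a b ε : ℝ) (ρ₀ u g : ℝ → ℝ) : ℝ :=
  ∫ r in (-1:ℝ)..1, ((g r) ^ 2 + (ε ^ 2)⁻¹ * fB a b (ρ₀ (r / ε)) * (u r) ^ 2)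

lemma aux_decay (a b α : ℝ) (ha : 0 < a) (hab : a < b)
    (hα' : α < Real.sqrt 2 * (b ^ 2 - a ^ 2) * a)
    (ρ : ℝ → ℝ) (hd : ∀ z, HasDerivAt ρ
      (Real.sqrt 2 / 2 * ((ρ z) ^ 2 - a ^ 2) * (b ^ 2 - (ρ z) ^ 2)) z)
    (hbnd : ∀ z, a < ρ z ∧ ρ z < b)
    (hbot : Filter.Tendsto ρ Filter.atBot (nhds a)) :
    ∃ z₀ : ℝ, ∃ K > (0:ℝ), ∀ z ≤ z₀, ρ z - a ≤ K * Real.exp (α * z) := by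
  have h1 : Tendsto (fun z => Real.sqrt 2 / 2 * (ρ z + a) * (b ^ 2 - (ρ z) ^ 2)) atBot
      (nhds (Real.sqrt 2 / 2 * (a + a) * (b ^ 2 - a ^ 2))) :=
    ((hbot.add_const a).const_mul _).mul ((hbot.pow 2).const_sub _)
  have h2 : ∀ᶠ z in atBot, α < Real.sqrt 2 / 2 * (ρ z + a) * (b ^ 2 - (ρ z) ^ 2) :=
    h1.eventually_const_lt (by linarith)
  obtain ⟨z₀, hz₀⟩ := eventually_atBot.1 h2
  have hF : ∀ z, HasDerivAt (fun z => (ρ z - a) * Real.exp (-(α * z)))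
      ((Real.sqrt 2 / 2 * ((ρ z) ^ 2 - a ^ 2) * (b ^ 2 - (ρ z) ^ 2)) * Real.exp (-(α * z))
        + (ρ z - a) * (Real.exp (-(α * z)) * (-(α * 1)))) z := fun z =>
    ((hd z).sub_const a).mul ((((hasDerivAt_id z).const_mul α).neg).exp)
  have hmono : MonotoneOn (fun z => (ρ z - a) * Real.exp (-(α * z))) (Set.Iic z₀) := by
    apply monotoneOn_of_deriv_nonneg (convex_Iic z₀)
    · exact fun z _ => (hF z).continuousAt.continuousWithinAt
    · exact fun z _ => (hF z).differentiableAt.differentiableWithinAt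
    · intro z hz
      rw [interior_Iic] at hz
      rw [(hF z).deriv]
      have e := Real.exp_pos (-(α * z))
      have h3 := hz₀ z hz.le
      have h4 := (hbnd z).1
      have : (Real.sqrt 2 / 2 * ((ρ z) ^ 2 - a ^ 2) * (b ^ 2 - (ρ z) ^ 2)) * Real.exp (-(α * z))
        + (ρ z - a) * (Real.exp (-(α * z)) * (-(α * 1))) = (ρ z - a) *
          (Real.sqrt 2 / 2 * (ρ z + a) * (b ^ 2 - (ρ z) ^ 2) - α) * Real.exp (-(α * z)) := by ring
      rw [this]
      exact mul_nonneg (mul_nonneg (by linarith) (by linarith)) e.le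
  refine ⟨z₀, (ρ z₀ - a) * Real.exp (-(α * z₀)), mul_pos (by linarith [(hbnd z₀).1])
    (Real.exp_pos _), fun z hz => ?_⟩
  have h5 := hmono hz (Set.mem_Iic.2 le_rfl) hz
  simp only at h5
  have h6 := mul_le_mul_of_nonneg_right h5 (Real.exp_pos (α * z)).le
  rwa [mul_assoc, ← Real.exp_add, neg_add_cancel, Real.exp_zero, mul_one] at h6

lemma aux_trace (v v' : ℝ → ℝ) (hv : ∀ r, HasDerivAt v (v' r) r) (hc : Continuous v')
    (hc0 : Continuous v) :
    v (-1) ^ 2 ≤ 2 * (∫ r in (-1:ℝ)..1, v r ^ 2) + ∫ r in (-1:ℝ)..1, v' r ^ 2 := by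
  have hF : ∀ r, HasDerivAt (fun r => (r - 1) * v r ^ 2)
      (1 * v r ^ 2 + (r - 1) * (2 * v r ^ 1 * v' r)) r := fun r => by
    have := ((hasDerivAt_id r).sub_const 1).mul ((hv r).pow 2)
    refine this.congr_deriv ?_
    simp
  have h1 := intervalIntegral.integral_eq_sub_of_hasDerivAt (a := -1) (b := 1) (fun r _ => hF r)
    (Continuous.intervalIntegrable (by fun_prop) _ _)
  have h2 : (∫ r in (-1:ℝ)..1, (1 * v r ^ 2 + (r - 1) * (2 * v r ^ 1 * v' r))) ≤
      ∫ r in (-1:ℝ)..1, (3 * v r ^ 2 + 2 * v' r ^ 2) := by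
    apply intervalIntegral.integral_mono_on (by norm_num)
      (Continuous.intervalIntegrable (by fun_prop) _ _)
      (Continuous.intervalIntegrable (by fun_prop) _ _)
    intro r hr
    have h3 : 0 ≤ 1 - r := by linarith [hr.2]
    have h4 : 0 ≤ 1 + r := by linarith [hr.1]
    nlinarith [mul_nonneg h3 (sq_nonneg (v r + v' r)), mul_nonneg h4 (sq_nonneg (v r)),
      mul_nonneg h4 (sq_nonneg (v' r))]
  rw [h1, intervalIntegral.integral_add (f := fun r => 3 * v r ^ 2) (g := fun r => 2 * v' r ^ 2)
      (Continuous.intervalIntegrable (by fun_prop) _ _)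
      (Continuous.intervalIntegrable (by fun_prop) _ _),
    intervalIntegral.integral_const_mul, intervalIntegral.integral_const_mul] at h2
  have h5 : 0 ≤ ∫ r in (-1:ℝ)..1, v r ^ 2 :=
    intervalIntegral.integral_nonneg (by norm_num) (fun _ _ => sq_nonneg _)
  norm_num at h2
  linarith

lemma aux_Q (a b ε : ℝ) (hε : 0 < ε) (ρ v v' : ℝ → ℝ)
    (hd : ∀ z, HasDerivAt ρ
      (Real.sqrt 2 / 2 * ((ρ z) ^ 2 - a ^ 2) * (b ^ 2 - (ρ z) ^ 2)) z)
    (hρ : Continuous ρ)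
    (hv : ∀ r, HasDerivAt v (v' r) r) (hc : Continuous v') (hc0 : Continuous v) :
    Q1 a b ε ρ (fun r => ρ (r / ε) * v r) (deriv (fun r => ρ (r / ε) * v r)) =
      (∫ r in (-1:ℝ)..1, (ρ (r / ε)) ^ 2 * (v' r) ^ 2)
      + (ρ (1/ε) * (Real.sqrt 2 / 2 * ((ρ (1/ε)) ^ 2 - a ^ 2) * (b ^ 2 - (ρ (1/ε)) ^ 2)) / ε
          * v 1 ^ 2
        - ρ (-1/ε) * (Real.sqrt 2 / 2 * ((ρ (-1/ε)) ^ 2 - a ^ 2) * (b ^ 2 - (ρ (-1/ε)) ^ 2)) / ε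
          * v (-1) ^ 2) := by
  have hR : ∀ r, HasDerivAt (fun r => ρ (r / ε))
      ((Real.sqrt 2 / 2 * ((ρ (r/ε)) ^ 2 - a ^ 2) * (b ^ 2 - (ρ (r/ε)) ^ 2)) * (1 / ε)) r :=
    fun r => (hd (r / ε)).comp r ((hasDerivAt_id r).div_const ε)
  have hu : ∀ r, deriv (fun r => ρ (r / ε) * v r) r =
      ((Real.sqrt 2 / 2 * ((ρ (r/ε)) ^ 2 - a ^ 2) * (b ^ 2 - (ρ (r/ε)) ^ 2)) * (1 / ε)) * v r
        + ρ (r / ε) * v' r := fun r => ((hR r).mul (hv r)).deriv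
  set H : ℝ → ℝ := fun r => ρ (r/ε) * (Real.sqrt 2 / 2 * ((ρ (r/ε)) ^ 2 - a ^ 2) *
    (b ^ 2 - (ρ (r/ε)) ^ 2)) / ε * v r ^ 2 with hH
  have hHd : ∀ r, HasDerivAt H ((deriv (fun r => ρ (r / ε) * v r) r) ^ 2
      + (ε ^ 2)⁻¹ * fB a b (ρ (r / ε)) * (ρ (r / ε) * v r) ^ 2
      - (ρ (r / ε)) ^ 2 * (v' r) ^ 2) r := by
    intro r
    have := (((hR r).mul (((((hR r).pow 2).sub_const (a^2)).const_mul (Real.sqrt 2 / 2)).mul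
      (((hR r).pow 2).const_sub (b^2)))).div_const ε).mul ((hv r).pow 2)
    refine this.congr_deriv ?_
    rw [hu r]
    simp only [Pi.mul_apply, Pi.pow_apply, fB]
    have hs : Real.sqrt 2 ^ 2 = 2 := Real.sq_sqrt (by norm_num)
    generalize Real.sqrt 2 = s at *
    generalize ρ (r / ε) = p at *
    field_simp
    push_cast
    ring_nf
    have hs3 : s ^ 3 = 2 * s := by rw [pow_succ, hs]
    simp only [hs, hs3]
    ring
  have hcu : Continuous (deriv (fun r => ρ (r / ε) * v r)) := by
    rw [funext hu]; fun_prop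
  have hcf : Continuous (fB a b) := by unfold fB; fun_prop
  have h1 := intervalIntegral.integral_eq_sub_of_hasDerivAt (a := -1) (b := 1) (fun r _ => hHd r)
    (Continuous.intervalIntegrable (by fun_prop) _ _)
  rw [intervalIntegral.integral_sub (Continuous.intervalIntegrable (by fun_prop) _ _)
      (Continuous.intervalIntegrable (by fun_prop) _ _)] at h1
  unfold Q1
  simp only [hH] at h1
  linarith

/-- For every `ν₀ ∈ (0, 1)` there exist `ε₀, C(ν₀) > 0` such that for all
`ε ∈ (0, ε₀)` and every `C¹` function `b̄₁`, with `b₁ = θ_{2,ε} b̄₁` (`θ_{2,ε}(r) = ρ₀(r/ε)`),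
`Q₁(b₁) ≥ (ν₀/2) ∫ θ_{2,ε}² (b̄₁')² − (C(ν₀)/ε) e^{−α/ε} ∫ θ_{2,ε}² b̄₁²`. -/
theorem statement16 (a b α : ℝ) (ha : 0 < a) (hab : a < b)
    (hα : 0 < α)
    (hα' : α < min (Real.sqrt 2 * (b ^ 2 - a ^ 2) * a) (Real.sqrt 2 * (b ^ 2 - a ^ 2) * b))
    (ρ₀ : ℝ → ℝ) (hreg : ContDiff ℝ 1 ρ₀)
    (hderiv : ∀ z, deriv ρ₀ z =
      Real.sqrt 2 / 2 * ((ρ₀ z) ^ 2 - a ^ 2) * (b ^ 2 - (ρ₀ z) ^ 2))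
    (hbnd : ∀ z, a < ρ₀ z ∧ ρ₀ z < b)
    (hbot : Filter.Tendsto ρ₀ Filter.atBot (nhds a))
    (htop : Filter.Tendsto ρ₀ Filter.atTop (nhds b))
    (hnorm : b * Real.log ((ρ₀ 0 - a) / (ρ₀ 0 + a))
      - a * Real.log ((b - ρ₀ 0) / (b + ρ₀ 0)) = 0)
    (ν₀ : ℝ) (hν₀ : ν₀ ∈ Set.Ioo (0:ℝ) 1) :
    ∃ ε₀ > (0:ℝ), ∃ C > (0:ℝ), ∀ ε ∈ Set.Ioo (0:ℝ) ε₀,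
      ∀ b₁bar : ℝ → ℝ, ContDiff ℝ 1 b₁bar →
        Q1 a b ε ρ₀ (fun r => ρ₀ (r / ε) * b₁bar r)
            (deriv (fun r => ρ₀ (r / ε) * b₁bar r)) ≥
          (ν₀ / 2) * (∫ r in (-1:ℝ)..1, (ρ₀ (r / ε)) ^ 2 * (deriv b₁bar r) ^ 2)
            - (C / ε) * Real.exp (-α / ε)
              * (∫ r in (-1:ℝ)..1, (ρ₀ (r / ε)) ^ 2 * (b₁bar r) ^ 2) := by
  have hdiff := hreg.differentiable (by norm_num)
  have hd : ∀ z, HasDerivAt ρ₀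
      (Real.sqrt 2 / 2 * ((ρ₀ z) ^ 2 - a ^ 2) * (b ^ 2 - (ρ₀ z) ^ 2)) z := fun z => by
    rw [← hderiv z]; exact (hdiff z).hasDerivAt
  have hρ := hreg.continuous
  obtain ⟨z₀, K, hK, hdec⟩ := aux_decay a b α ha hab (lt_of_lt_of_le hα' (min_le_left _ _)) ρ₀ hd
    hbnd hbot
  have hb : 0 < b := ha.trans hab
  have hs : 0 < Real.sqrt 2 := by positivity
  obtain ⟨M, hM⟩ : ∃ M, M = b * (Real.sqrt 2 / 2 * (2 * b) * b ^ 2) * K / a ^ 2 := ⟨_, rfl⟩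
  have hMpos : 0 < M := by rw [hM]; positivity
  refine ⟨min (1 / (|z₀| + 1)) (α ^ 2 / (4 * M)), by positivity, 2 * M, by positivity, ?_⟩
  intro ε hε v hv
  have hε0 : 0 < ε := hε.1
  have hε1 : ε < 1 / (|z₀| + 1) := hε.2.trans_le (min_le_left _ _)
  have hε2 : ε < α ^ 2 / (4 * M) := hε.2.trans_le (min_le_right _ _)
  have hvd : ∀ r, HasDerivAt v (deriv v r) r := fun r =>
    (hv.differentiable (by norm_num) r).hasDerivAt
  have hvc : Continuous (deriv v) := hv.continuous_deriv (by norm_num)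
  have hvc0 := hv.continuous
  rw [aux_Q a b ε hε0 ρ₀ v (deriv v) hd hρ hvd hvc hvc0]
  have htr := aux_trace v (deriv v) hvd hvc hvc0
  have hz : -1 / ε ≤ z₀ := by
    rw [div_le_iff₀ hε0]
    rw [lt_div_iff₀ (by positivity)] at hε1
    nlinarith [neg_abs_le z₀]
  have hw := hdec _ hz
  rw [show α * (-1 / ε) = -α / ε by ring] at hw
  obtain ⟨E, hE⟩ : ∃ E, E = Real.exp (-α / ε) := ⟨_, rfl⟩
  rw [← hE] at hw ⊢
  have hEpos : 0 < E := by rw [hE]; exact Real.exp_pos _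
  have hEs : M / ε * E ≤ 1 / 2 := by
    have h1 := Real.quadratic_le_exp_of_nonneg (x := α / ε) (by positivity)
    have h2 : E * Real.exp (α / ε) = 1 := by
      rw [hE, ← Real.exp_add, show -α / ε + α / ε = 0 by ring, Real.exp_zero]
    have h3 : E * (α ^ 2 / (2 * ε ^ 2)) ≤ 1 := by
      rw [← h2]
      apply mul_le_mul_of_nonneg_left _ hEpos.le
      have : 0 < α / ε := by positivity
      have h4 : (α / ε) ^ 2 / 2 = α ^ 2 / (2 * ε ^ 2) := by field_simp
      linarith
    rw [lt_div_iff₀ (by positivity)] at hε2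
    have h5 : M / ε ≤ 1 / 2 * (α ^ 2 / (2 * ε ^ 2)) := by
      rw [show 1 / 2 * (α ^ 2 / (2 * ε ^ 2)) = (α ^ 2 / (4 * ε)) / ε by field_simp; norm_num]
      apply div_le_div_of_nonneg_right _ hε0.le
      rw [le_div_iff₀ (by positivity)]
      linarith
    nlinarith [mul_le_mul_of_nonneg_right h5 hEpos.le]
  have hT : ρ₀ (-1/ε) * (Real.sqrt 2 / 2 * ((ρ₀ (-1/ε)) ^ 2 - a ^ 2) * (b ^ 2 - (ρ₀ (-1/ε)) ^ 2)) / ε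
      ≤ M / ε * E * a ^ 2 := by
    obtain ⟨h1, h2⟩ := hbnd (-1/ε)
    generalize ρ₀ (-1/ε) = p at *
    have hp : 0 < p := ha.trans h1
    have h3 : p * (Real.sqrt 2 / 2 * (p ^ 2 - a ^ 2) * (b ^ 2 - p ^ 2))
        ≤ b * (Real.sqrt 2 / 2 * ((2 * b) * (K * E)) * b ^ 2) := by
      have h4 : p ^ 2 - a ^ 2 ≤ (2 * b) * (K * E) := by
        rw [show p ^ 2 - a ^ 2 = (p + a) * (p - a) by ring]
        exact mul_le_mul (by linarith) hw (by linarith) (by linarith)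
      have h5 : 0 ≤ p ^ 2 - a ^ 2 := by nlinarith
      have h6 : 0 ≤ b ^ 2 - p ^ 2 := by nlinarith
      have h7 : b ^ 2 - p ^ 2 ≤ b ^ 2 := by nlinarith
      gcongr
    calc _ ≤ b * (Real.sqrt 2 / 2 * ((2 * b) * (K * E)) * b ^ 2) / ε :=
          div_le_div_of_nonneg_right h3 hε0.le
      _ = _ := by rw [hM]; field_simp
  have hP : 0 ≤ ρ₀ (1/ε) * (Real.sqrt 2 / 2 * ((ρ₀ (1/ε)) ^ 2 - a ^ 2) *
      (b ^ 2 - (ρ₀ (1/ε)) ^ 2)) / ε * v 1 ^ 2 := by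
    obtain ⟨h1, h2⟩ := hbnd (1/ε)
    generalize ρ₀ (1/ε) = p at *
    have hp : 0 < p := ha.trans h1
    have h5 : 0 ≤ p ^ 2 - a ^ 2 := by nlinarith
    have h6 : 0 ≤ b ^ 2 - p ^ 2 := by nlinarith
    positivity
  have hcmp : ∀ f : ℝ → ℝ, Continuous f → a ^ 2 * (∫ r in (-1:ℝ)..1, f r ^ 2) ≤
      ∫ r in (-1:ℝ)..1, (ρ₀ (r / ε)) ^ 2 * (f r) ^ 2 := by
    intro f hf
    rw [← intervalIntegral.integral_const_mul]
    apply intervalIntegral.integral_mono_on (by norm_num)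
      (Continuous.intervalIntegrable (by fun_prop) _ _)
      (Continuous.intervalIntegrable (by fun_prop) _ _)
    intro r _
    have := (hbnd (r/ε)).1
    gcongr
  have hA := hcmp v hvc0
  have hB := hcmp _ hvc
  have hB0 : 0 ≤ ∫ r in (-1:ℝ)..1, (ρ₀ (r / ε)) ^ 2 * (deriv v r) ^ 2 :=
    intervalIntegral.integral_nonneg (by norm_num) (fun _ _ => by positivity)
  have hT2 := mul_le_mul_of_nonneg_right hT (sq_nonneg (v (-1)))
  have hδ : 0 ≤ M / ε * E := by positivity
  rw [show 2 * M / ε * E = 2 * (M / ε * E) by ring]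
  generalize (∫ r in (-1:ℝ)..1, (ρ₀ (r / ε)) ^ 2 * (deriv v r) ^ 2) = IB at *
  generalize (∫ r in (-1:ℝ)..1, (ρ₀ (r / ε)) ^ 2 * (v r) ^ 2) = IA at *
  generalize M / ε * E = δ at *
  have h8 : a ^ 2 * v (-1) ^ 2 ≤ 2 * IA + IB := by
    have := mul_le_mul_of_nonneg_left htr (sq_nonneg a)
    linarith
  have h9 := mul_le_mul_of_nonneg_left h8 hδ
  have h10 := mul_le_mul_of_nonneg_right hEs hB0
  have h11 := mul_le_mul_of_nonneg_right hν₀.2.le hB0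
  linarith
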